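/- For every integer k ≥ 0, the subspace ψ(H_{k+1}) of ℝ[x₁,…,xₙ]ⁿ is irreducible under the o(n,ℝ)-action: it is invariant under all the operators L_{r,s} (1 ≤ r < s ≤ n), and its only L_{r,s}-invariant ℝ-subspaces are {0} and ψ(H_{k+1}) itself. -/

import Mathlib

open MvPolynomial

/-- The Laplacian `Δ = ∑ᵣ ∂²_{xᵣ}` on `ℝ[x₁,…,xₙ]`. -/
noncomputable def lap {n : ℕ} (p : MvPolynomial (Fin n) ℝ) : MvPolynomial (Fin n) ℝ :=
  ∑ r : Fin n, pderiv r (pderiv r p)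

/-- The gradient map `ψ(f) = (∂_{x₁}f,…,∂_{xₙ}f)`. -/
noncomputable def gradPsi {n : ℕ} (f : MvPolynomial (Fin n) ℝ) :
    Fin n → MvPolynomial (Fin n) ℝ :=
  fun j => pderiv j f

/-- The set `ψ(H_{k+1})`. -/
def psiH (n k : ℕ) : Set (Fin n → MvPolynomial (Fin n) ℝ) :=
  {v | ∃ f : MvPolynomial (Fin n) ℝ,
    f.IsHomogeneous (k + 1) ∧ lap f = 0 ∧ v = gradPsi f}

/-- The `o(n,ℝ)`-action on tuples:
`L_{r,s}(u) = (x_r∂_{x_s} − x_s∂_{x_r})(u) + u_s ς_r − u_r ς_s`. -/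
noncomputable def Lop {n : ℕ} (r s : Fin n) (u : Fin n → MvPolynomial (Fin n) ℝ) :
    Fin n → MvPolynomial (Fin n) ℝ :=
  fun j => (X r * pderiv s (u j) - X s * pderiv r (u j))
    + (if j = r then u s else 0) - (if j = s then u r else 0)

/-!
The gradient intertwines the infinitesimal rotations `x_r ∂_s − x_s ∂_r` with the operators
`L_{r,s}`, so it suffices that a nonzero rotation-invariant space `V` of harmonic polynomials of
degree `m` contains all of them. This goes by induction on `m`. The partial derivatives of the
elements of `V` span a nonzero rotation-invariant space of harmonic polynomials of one degree less,
which by induction contains every `∂ᵢh` with `h` harmonic of degree `m + 1`. A quadratic expression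
in the rotations (a polarised Casimir operator) shows that
`Tᵢ g = (n + 2m − 2) xᵢ g − |x|² ∂ᵢg` maps the span of the derivatives back into `V`, and by Euler's
identity `∑ᵢ Tᵢ (∂ᵢh)` is the nonzero multiple `(n + 2m − 2)(m + 1) h` of `h`.
-/

theorem pderiv_pderiv_comm {σ R : Type*} [CommSemiring R] (i j : σ) (f : MvPolynomial σ R) :
    pderiv i (pderiv j f) = pderiv j (pderiv i f) := by
  classical
  obtain rfl | hij := eq_or_ne i j
  · rfl
  · ext d
    simp [coeff_pderiv, add_right_comm, mul_right_comm, hij, hij.symm]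

section Rotation

variable {σ R : Type*} [CommRing R]

/-- The infinitesimal rotation `x_r ∂_s − x_s ∂_r`, by which `o(n)` acts on polynomials. -/
noncomputable def rot (r s : σ) : Derivation R (MvPolynomial σ R) (MvPolynomial σ R) :=
  (X r : MvPolynomial σ R) • pderiv s - (X s : MvPolynomial σ R) • pderiv r

theorem rot_apply (r s : σ) (f : MvPolynomial σ R) :
    rot r s f = X r * pderiv s f - X s * pderiv r f := rfl

theorem rot_self (r : σ) : rot (R := R) r r = 0 := sub_self _

theorem neg_rot (r s : σ) : -rot (R := R) r s = rot s r := neg_sub _ _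

theorem pderiv_rot [DecidableEq σ] (j r s : σ) (f : MvPolynomial σ R) :
    pderiv j (rot r s f) = rot r s (pderiv j f)
      + (if j = r then pderiv s f else 0) - (if j = s then pderiv r f else 0) := by
  simp only [rot_apply, map_sub, pderiv_mul, pderiv_X, Pi.single_apply, pderiv_pderiv_comm j,
    @eq_comm _ j]
  split_ifs <;> ring

theorem isHomogeneous_rot {f : MvPolynomial σ R} {m : ℕ} (hf : f.IsHomogeneous m) (r s : σ) :
    (rot r s f).IsHomogeneous m := by
  cases m with
  | zero =>
    rw [← totalDegree_zero_iff_isHomogeneous, totalDegree_eq_zero_iff_eq_C] at hf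
    rw [hf, rot_apply, pderiv_C, pderiv_C, mul_zero, mul_zero, sub_zero]
    exact isHomogeneous_zero _ _ _
  | succ m =>
    have h (i j : σ) : (X i * pderiv j f).IsHomogeneous (m + 1) := by
      simpa only [add_comm, Nat.add_sub_cancel] using (isHomogeneous_X R i).mul hf.pderiv
    exact (h r s).sub (h s r)

theorem rot_rot_apply [DecidableEq σ] (i l j : σ) (f : MvPolynomial σ R) :
    rot i l (rot l j f) =
      X i * pderiv j f + X i * (X l * pderiv l (pderiv j f))
        - (if l = j then X i * pderiv l f else 0) - X i * X j * pderiv l (pderiv l f)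
        - (if i = l then X l * pderiv j f else 0) - X l ^ 2 * pderiv i (pderiv j f)
        + (if i = j then X l * pderiv l f else 0) + X j * (X l * pderiv l (pderiv i f)) := by
  rw [rot_apply i, pderiv_rot, pderiv_rot, rot_apply, rot_apply, pderiv_pderiv_comm j l,
    pderiv_pderiv_comm j i, if_pos rfl]
  split_ifs <;> ring

/-- A subspace of polynomials is rotation-invariant if it is stable under all infinitesimal
rotations, i.e. if it is an `o(n)`-submodule. -/
def IsRotInvariant (V : Submodule R (MvPolynomial σ R)) : Prop :=
  ∀ r s, ∀ f ∈ V, rot r s f ∈ V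

theorem isRotInvariant_of_lt [LinearOrder σ] {V : Submodule R (MvPolynomial σ R)}
    (hV : ∀ r s, r < s → ∀ f ∈ V, rot r s f ∈ V) : IsRotInvariant V := by
  intro r s f hf
  obtain hrs | rfl | hsr := lt_trichotomy r s
  · exact hV r s hrs f hf
  · rw [rot_self]
    exact V.zero_mem
  · rw [← neg_rot]
    exact V.neg_mem (hV s r hsr f hf)

/-- The span of all partial derivatives of the elements of `V`, which lowers the degree in the
induction. -/
noncomputable def pderivSpan (V : Submodule R (MvPolynomial σ R)) :
    Submodule R (MvPolynomial σ R) :=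
  ⨆ j, V.map (pderiv j).toLinearMap

theorem pderivSpan_le_iff {V D : Submodule R (MvPolynomial σ R)} :
    pderivSpan V ≤ D ↔ ∀ j, ∀ f ∈ V, pderiv j f ∈ D := by
  simp only [pderivSpan, iSup_le_iff, Submodule.map_le_iff_le_comap]
  rfl

theorem pderiv_mem_pderivSpan {V : Submodule R (MvPolynomial σ R)} {f : MvPolynomial σ R}
    (hf : f ∈ V) (j : σ) : pderiv j f ∈ pderivSpan V :=
  pderivSpan_le_iff.1 le_rfl j f hf

theorem isRotInvariant_pderivSpan {V : Submodule R (MvPolynomial σ R)}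
    (hV : IsRotInvariant V) : IsRotInvariant (pderivSpan V) := by
  classical
  intro r s
  suffices h : pderivSpan V ≤ (pderivSpan V).comap (rot r s).toLinearMap from
    fun f hf => h hf
  refine pderivSpan_le_iff.2 fun j f hf => ?_
  have hcomm : rot r s (pderiv j f) = pderiv j (rot r s f)
      - (if j = r then pderiv s f else 0) + (if j = s then pderiv r f else 0) := by
    rw [pderiv_rot]
    ring
  have hite (p : Prop) [Decidable p] (t : σ) :
      (if p then pderiv t f else 0) ∈ pderivSpan V := by
    split_ifs
    exacts [pderiv_mem_pderivSpan hf t, zero_mem _]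
  change rot r s (pderiv j f) ∈ pderivSpan V
  rw [hcomm]
  exact add_mem (sub_mem (pderiv_mem_pderivSpan (hV r s f hf) j) (hite _ s)) (hite _ r)

theorem pderivSpan_ne_bot [Finite σ] [IsAddTorsionFree R] {m : ℕ}
    {V : Submodule R (MvPolynomial σ R)} (hV : V ≤ homogeneousSubmodule σ R (m + 1)) (hne : V ≠ ⊥) :
    pderivSpan V ≠ ⊥ := by
  have := Fintype.ofFinite σ
  intro hbot
  refine hne ((Submodule.eq_bot_iff V).2 fun f hf => ?_)
  have hpderiv (j : σ) : pderiv j f = 0 :=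
    (Submodule.mem_bot R).1 (hbot ▸ pderiv_mem_pderivSpan hf j)
  have euler : ∑ i, X i * pderiv i f = (m + 1) • f := IsHomogeneous.sum_X_mul_pderiv (hV hf)
  simp only [hpderiv, mul_zero, Finset.sum_const_zero] at euler
  ext d
  refine (nsmul_eq_zero_iff_right m.succ_ne_zero).1 ?_
  rw [← coeff_smul, ← euler, coeff_zero]

end Rotation

section Harmonic

variable {σ R : Type*} [CommRing R] [Fintype σ]

/-- The Laplacian `lap`, as a linear map and with coefficients in any commutative ring. -/
noncomputable def polyLaplacian : MvPolynomial σ R →ₗ[R] MvPolynomial σ R :=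
  ∑ i, (pderiv i).toLinearMap ∘ₗ (pderiv i).toLinearMap

theorem polyLaplacian_apply (f : MvPolynomial σ R) :
    polyLaplacian f = ∑ i, pderiv i (pderiv i f) := by
  simp [polyLaplacian]

theorem polyLaplacian_pderiv (j : σ) (f : MvPolynomial σ R) :
    polyLaplacian (pderiv j f) = pderiv j (polyLaplacian f) := by
  simp only [polyLaplacian_apply, map_sum, pderiv_pderiv_comm j]

theorem polyLaplacian_X_mul (i : σ) (f : MvPolynomial σ R) :
    polyLaplacian (X i * f) = 2 * pderiv i f + X i * polyLaplacian f := by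
  classical
  have hterm (l : σ) : pderiv l (pderiv l (X i * f)) =
      (if i = l then 2 * pderiv l f else 0) + X i * pderiv l (pderiv l f) := by
    simp only [pderiv_mul, map_add, pderiv_X, Pi.single_apply]
    split_ifs
    · simp only [one_mul, Derivation.map_one_eq_zero]
      ring
    · simp
  simp only [polyLaplacian_apply, hterm, Finset.sum_add_distrib, Finset.mul_sum,
    Finset.sum_ite_eq, Finset.mem_univ, if_true]

theorem polyLaplacian_rot (r s : σ) (f : MvPolynomial σ R) :
    polyLaplacian (rot r s f) = rot r s (polyLaplacian f) := by
  simp only [rot_apply, map_sub, polyLaplacian_X_mul, polyLaplacian_pderiv,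
    pderiv_pderiv_comm r s]
  ring

variable (σ R) in
/-- The space `H_m` of harmonic homogeneous polynomials of degree `m`. -/
noncomputable def harmonicSubmodule (m : ℕ) : Submodule R (MvPolynomial σ R) :=
  homogeneousSubmodule σ R m ⊓ LinearMap.ker polyLaplacian

theorem mem_harmonicSubmodule {m : ℕ} {f : MvPolynomial σ R} :
    f ∈ harmonicSubmodule σ R m ↔ f.IsHomogeneous m ∧ polyLaplacian f = 0 := Iff.rfl

theorem isRotInvariant_harmonicSubmodule (m : ℕ) : IsRotInvariant (harmonicSubmodule σ R m) :=
  fun r s f hf => mem_harmonicSubmodule.2 ⟨isHomogeneous_rot hf.1 r s, by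
    rw [polyLaplacian_rot, (mem_harmonicSubmodule.1 hf).2, map_zero]⟩

theorem pderiv_mem_harmonicSubmodule {m : ℕ} {f : MvPolynomial σ R}
    (hf : f ∈ harmonicSubmodule σ R (m + 1)) (j : σ) : pderiv j f ∈ harmonicSubmodule σ R m :=
  mem_harmonicSubmodule.2 ⟨IsHomogeneous.pderiv hf.1, by
    rw [polyLaplacian_pderiv, (mem_harmonicSubmodule.1 hf).2, map_zero]⟩

theorem sum_rot_rot [DecidableEq σ] {m : ℕ} {f : MvPolynomial σ R}
    (hf : f.IsHomogeneous (m + 1)) (i j : σ) :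
    ∑ l, rot i l (rot l j f) =
      ((Fintype.card σ : R) + m - 2) • (X i * pderiv j f) + (m : R) • (X j * pderiv i f)
        + (if i = j then (m + 1 : R) else 0) • f
        - X i * X j * polyLaplacian f - (∑ l, X l ^ 2) * pderiv i (pderiv j f) := by
  have euler_pderiv (t : σ) : ∑ l, X l * pderiv l (pderiv t f) = m • pderiv t f :=
    (hf.pderiv (i := t)).sum_X_mul_pderiv
  have sum_ite_euler : ∑ l, (if i = j then X l * pderiv l f else 0)
      = if i = j then (m + 1) • f else 0 := by
    split_ifs
    exacts [hf.sum_X_mul_pderiv, Finset.sum_const_zero]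
  simp only [rot_rot_apply, Finset.sum_add_distrib, Finset.sum_sub_distrib, ← Finset.mul_sum,
    ← Finset.sum_mul, Finset.sum_ite_eq, Finset.sum_ite_eq', Finset.mem_univ, if_true,
    euler_pderiv, sum_ite_euler, ← polyLaplacian_apply, Finset.sum_const, Finset.card_univ]
  simp only [smul_eq_C_mul, nsmul_eq_mul, apply_ite C, map_sub, map_add, map_natCast, map_ofNat,
    map_one, map_zero, Nat.cast_add, Nat.cast_one]
  split_ifs <;> ring

/-- The operator `g ↦ (n + 2m − 2) xᵢ g − |x|² ∂ᵢg`. On harmonic `g` of degree `m` it is a multiple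
of the harmonic part of `xᵢ g`, so it takes `H_m` to `H_{m+1}`. -/
noncomputable def harmonicRaise (m : ℕ) (i : σ) : MvPolynomial σ R →ₗ[R] MvPolynomial σ R :=
  ((Fintype.card σ : R) + 2 * m - 2) • LinearMap.mulLeft R (X i)
    - LinearMap.mulLeft R (∑ l, X l ^ 2) ∘ₗ (pderiv i).toLinearMap

theorem harmonicRaise_apply (m : ℕ) (i : σ) (g : MvPolynomial σ R) :
    harmonicRaise m i g =
      ((Fintype.card σ : R) + 2 * m - 2) • (X i * g) - (∑ l, X l ^ 2) * pderiv i g := rfl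

theorem harmonicRaise_pderiv [DecidableEq σ] {m : ℕ} {f : MvPolynomial σ R}
    (hf : f ∈ harmonicSubmodule σ R (m + 1)) (i j : σ) :
    harmonicRaise m i (pderiv j f) =
      ∑ l, rot i l (rot l j f) + (m : R) • rot i j f
        - (if i = j then (m + 1 : R) else 0) • f := by
  rw [sum_rot_rot hf.1, (mem_harmonicSubmodule.1 hf).2, harmonicRaise_apply, rot_apply,
    mul_zero, sub_zero]
  module

theorem harmonicRaise_mem_of_mem_pderivSpan {m : ℕ} {V : Submodule R (MvPolynomial σ R)}
    (hV : V ≤ harmonicSubmodule σ R (m + 1)) (hrot : IsRotInvariant V) (i : σ)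
    {g : MvPolynomial σ R} (hg : g ∈ pderivSpan V) : harmonicRaise m i g ∈ V := by
  classical
  suffices h : pderivSpan V ≤ V.comap (harmonicRaise m i) from h hg
  refine pderivSpan_le_iff.2 fun j f hf => ?_
  rw [Submodule.mem_comap, harmonicRaise_pderiv (hV hf)]
  exact sub_mem (add_mem (sum_mem fun l _ => hrot _ _ _ (hrot _ _ _ hf))
    (V.smul_mem _ (hrot _ _ _ hf))) (V.smul_mem _ hf)

theorem sum_harmonicRaise_pderiv {m : ℕ} {f : MvPolynomial σ R}
    (hf : f ∈ harmonicSubmodule σ R (m + 1)) :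
    ∑ i, harmonicRaise m i (pderiv i f) =
      (((Fintype.card σ : R) + 2 * m - 2) * (m + 1 : ℕ)) • f := by
  simp only [harmonicRaise_apply, Finset.sum_sub_distrib, ← Finset.smul_sum, ← Finset.mul_sum]
  rw [← polyLaplacian_apply, (mem_harmonicSubmodule.1 hf).2, mul_zero, sub_zero,
    IsHomogeneous.sum_X_mul_pderiv hf.1, mul_smul, Nat.cast_smul_eq_nsmul]

end Harmonic

section Irreducible

variable {σ K : Type*} [Field K]

theorem isAtom_homogeneousSubmodule_zero : IsAtom (homogeneousSubmodule σ K 0) := by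
  rw [homogeneousSubmodule_zero, Submodule.one_eq_span]
  exact nonzero_span_atom 1 one_ne_zero

theorem eq_harmonicSubmodule_of_isRotInvariant [CharZero K] [Fintype σ] (hσ : 3 ≤ Fintype.card σ)
    {m : ℕ} {V : Submodule K (MvPolynomial σ K)} (hV : V ≤ harmonicSubmodule σ K m)
    (hrot : IsRotInvariant V) (hne : V ≠ ⊥) : V = harmonicSubmodule σ K m := by
  induction m generalizing V with
  | zero =>
    have hV_eq : V = homogeneousSubmodule σ K 0 :=
      (isAtom_homogeneousSubmodule_zero.le_iff.1 (hV.trans inf_le_left)).resolve_left hne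
    exact hV.antisymm (hV_eq ▸ inf_le_left)
  | succ m ih =>
    have hspan : pderivSpan V = harmonicSubmodule σ K m :=
      ih (pderivSpan_le_iff.2 fun j f hf => pderiv_mem_harmonicSubmodule (hV hf) j)
        (isRotInvariant_pderivSpan hrot) (pderivSpan_ne_bot (hV.trans inf_le_left) hne)
    refine hV.antisymm fun h hh => ?_
    have hsum : ∑ i, harmonicRaise m i (pderiv i h) ∈ V := sum_mem fun i _ =>
      harmonicRaise_mem_of_mem_pderivSpan hV hrot i
        (hspan ▸ pderiv_mem_harmonicSubmodule hh i)
    have hcoeff : (Fintype.card σ : K) + 2 * m - 2 ≠ 0 := by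
      rw [sub_ne_zero]
      exact_mod_cast (by omega : Fintype.card σ + 2 * m ≠ 2)
    rw [sum_harmonicRaise_pderiv hh] at hsum
    exact (V.smul_mem_iff (mul_ne_zero hcoeff (Nat.cast_ne_zero.2 m.succ_ne_zero))).1 hsum

end Irreducible

section Gradient

variable {σ R : Type*} [CommRing R]

/-- The gradient map `gradPsi`, as a linear map and with coefficients in any commutative ring. -/
noncomputable def polyGradient : MvPolynomial σ R →ₗ[R] (σ → MvPolynomial σ R) :=
  LinearMap.pi fun j => (pderiv j).toLinearMap

/-- The operator `Lop r s` on tuples of polynomials, with coefficients in any commutative ring. -/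
noncomputable def tupleRot [DecidableEq σ] (r s : σ) (u : σ → MvPolynomial σ R) :
    σ → MvPolynomial σ R :=
  fun j => rot r s (u j) + (if j = r then u s else 0) - (if j = s then u r else 0)

theorem polyGradient_rot [DecidableEq σ] (r s : σ) (f : MvPolynomial σ R) :
    polyGradient (rot r s f) = tupleRot r s (polyGradient f) :=
  funext fun j => pderiv_rot j r s f

variable [Fintype σ]

variable (σ R) in
/-- The submodule `ψ(H_{k+1})`; as in `psiH`, the index `k` is the degree of the gradients. -/
noncomputable def harmonicGradients (k : ℕ) : Submodule R (σ → MvPolynomial σ R) :=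
  (harmonicSubmodule σ R (k + 1)).map polyGradient

theorem tupleRot_mem_harmonicGradients [DecidableEq σ] {k : ℕ} (r s : σ)
    {u : σ → MvPolynomial σ R} (hu : u ∈ harmonicGradients σ R k) :
    tupleRot r s u ∈ harmonicGradients σ R k := by
  obtain ⟨f, hf, rfl⟩ := hu
  rw [← polyGradient_rot]
  exact Submodule.mem_map_of_mem (isRotInvariant_harmonicSubmodule _ r s f hf)

theorem coe_harmonicGradients (n k : ℕ) :
    (harmonicGradients (Fin n) ℝ k : Set (Fin n → MvPolynomial (Fin n) ℝ)) = psiH n k := by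
  ext u
  simp only [psiH, harmonicGradients, SetLike.mem_coe, Submodule.mem_map,
    mem_harmonicSubmodule, polyLaplacian_apply, lap, Set.mem_ofPred_eq, and_assoc, @eq_comm _ u]
  rfl

theorem tupleRot_eq_Lop {n : ℕ} (r s : Fin n) (u : Fin n → MvPolynomial (Fin n) ℝ) :
    tupleRot r s u = Lop r s u := rfl

end Gradient

theorem psiH_irreducible_general {σ K : Type*} [Fintype σ] [LinearOrder σ] [Field K] [CharZero K]
    (hσ : 3 ≤ Fintype.card σ) (k : ℕ) :
    (∀ r s : σ, ∀ u ∈ harmonicGradients σ K k, tupleRot r s u ∈ harmonicGradients σ K k) ∧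
    (∀ W ≤ harmonicGradients σ K k, (∀ r s : σ, r < s → ∀ u ∈ W, tupleRot r s u ∈ W) →
      W = ⊥ ∨ W = harmonicGradients σ K k) := by
  refine ⟨fun r s u hu => tupleRot_mem_harmonicGradients r s hu, fun W hW hL => ?_⟩
  let V : Submodule K (MvPolynomial σ K) :=
    harmonicSubmodule σ K (k + 1) ⊓ W.comap polyGradient
  have hVW : V.map polyGradient = W := by
    refine le_antisymm (Submodule.map_le_iff_le_comap.2 inf_le_right) fun u hu => ?_
    obtain ⟨f, hf, rfl⟩ := hW hu
    exact Submodule.mem_map_of_mem ⟨hf, hu⟩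
  have hrot : IsRotInvariant V := isRotInvariant_of_lt fun r s hrs f hf =>
    ⟨isRotInvariant_harmonicSubmodule _ r s f hf.1,
      Submodule.mem_comap.2 (by rw [polyGradient_rot]; exact hL r s hrs _ hf.2)⟩
  refine (eq_or_ne V ⊥).imp (fun hV => ?_) fun hV => ?_
  · rw [← hVW, hV, Submodule.map_bot]
  · have hV_eq : V = harmonicSubmodule σ K (k + 1) :=
      eq_harmonicSubmodule_of_isRotInvariant hσ inf_le_left hrot hV
    rw [← hVW, hV_eq, harmonicGradients]

/-- `ψ(H_{k+1})` is invariant under all `L_{r,s}` and is irreducible: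
its only `L_{r,s}`-invariant ℝ-subspaces are `{0}` and itself. -/
theorem psiH_irreducible (n : ℕ) (hn : 3 ≤ n) (k : ℕ) :
    (∀ r s : Fin n, r < s → ∀ u ∈ psiH n k, Lop r s u ∈ psiH n k) ∧
    (∀ W : Submodule ℝ (Fin n → MvPolynomial (Fin n) ℝ),
      (W : Set (Fin n → MvPolynomial (Fin n) ℝ)) ⊆ psiH n k →
      (∀ r s : Fin n, r < s → ∀ u ∈ W, Lop r s u ∈ W) →
      (W : Set (Fin n → MvPolynomial (Fin n) ℝ)) = {0} ∨
        (W : Set (Fin n → MvPolynomial (Fin n) ℝ)) = psiH n k) := by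
  obtain ⟨hinv, hirr⟩ := psiH_irreducible_general (σ := Fin n) (K := ℝ) (by simpa using hn) k
  simpa only [← coe_harmonicGradients, tupleRot_eq_Lop, SetLike.coe_subset_coe, SetLike.mem_coe,
    ← Submodule.bot_coe (R := ℝ), SetLike.coe_set_eq] using And.intro (fun r s _ => hinv r s) hirr
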